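/- arXiv:1605.04203 — 2 statements merged into one kernel-verified Lean document; each statement's English description precedes it below -/
import Mathlib

section
/- Let R = ℂ[x_0,…,x_n], let J ⊆ R be a homogeneous ideal, and let l ∈ R be homogeneous of degree 1 and not a zero-divisor on R/J. If P is a minimal prime over J such that the length of the R_P-module (R/J)_P equals m, then Q = P + ⟨l − 1⟩ is a minimal prime over J + ⟨l − 1⟩, and the length of the R_Q-module (R/(J + ⟨l − 1⟩))_Q also equals m. -/
open MvPolynomial
open scoped Classical

noncomputable section

/-- The length of a module: the Krull dimension of its lattice of submodules,
i.e. the supremum of the lengths of strictly increasing chains of submodules. -/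
def moduleLength (R M : Type*) [Ring R] [AddCommGroup M] [Module R M] : WithBot ℕ∞ :=
  Order.krullDim (Submodule R M)

/-- The multiplicity of an ideal `A` at a prime `P`: the length of the localization
`(R ⧸ A)_P` as a module over the localization `R_P` (junk value `0` if `P` is not prime). -/
def localMult {R : Type*} [CommRing R] (A P : Ideal R) : WithBot ℕ∞ :=
  if h : P.IsPrime then
    letI := h
    moduleLength (Localization P.primeCompl) (LocalizedModule P.primeCompl (R ⧸ A))
  else 0

/-!
Since `l` has degree `1`, the localization `A_l` is the Laurent polynomial ring over `A ⧸ ⟨l - 1⟩`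
with variable `l`: dividing each homogeneous `a` by `l ^ deg a` defines a faithfully flat map
`φ : A ⧸ ⟨l - 1⟩ → A_l`. It differs from the localization map by units on homogeneous elements,
so `I (A ⧸ ⟨l - 1⟩)` and `I` extend to the same ideal of `A_l` when `I` is homogeneous. This applies
to `J` and to its minimal prime `P`. Flat maps take the multiplicity of an ideal at the contraction
of `Q` to that of its extension at `Q` as soon as `Q` is itself extended; hence the multiplicities
of `J` at `P` and of `J (A ⧸ ⟨l - 1⟩)` at `P (A ⧸ ⟨l - 1⟩)` both equal that of `J A_l` at `P A_l`.
-/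

section Length

variable {R S : Type*} [CommRing R] [CommRing S] {f : R →+* S}

theorem localMult_eq_length (I P : Ideal R) [hP : P.IsPrime] :
    localMult I P = (Module.length (Localization.AtPrime P)
      (Localization.AtPrime P ⧸ I.map (algebraMap R (Localization.AtPrime P))) : WithBot ℕ∞) := by
  have e : LocalizedModule P.primeCompl (R ⧸ I) ≃ₗ[Localization P.primeCompl]
      Localization P.primeCompl ⧸ I.map (algebraMap R (Localization P.primeCompl)) :=
    (LocalizedModule.equivTensorProduct P.primeCompl (R ⧸ I)).trans
      (Algebra.TensorProduct.quotIdealMapEquivTensorQuot _ I).symm.toLinearEquiv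
  rw [localMult, dif_pos hP, moduleLength, ← Module.coe_length, e.length_eq]

theorem length_quotient_comap_of_surjective (hf : Function.Surjective f) (I : Ideal S) :
    Module.length R (R ⧸ I.comap f) = Module.length S (S ⧸ I) := by
  algebraize [f]
  have hmk : Function.Surjective (Algebra.ofId R (S ⧸ I)) := Ideal.Quotient.mk_surjective.comp hf
  have hker : RingHom.ker (Algebra.ofId R (S ⧸ I)) = I.comap f := by
    ext x
    exact Ideal.Quotient.eq_zero_iff_mem
  rw [← hker, (Ideal.quotientKerAlgEquivOfSurjective hmk).toLinearEquiv.length_eq]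
  exact Module.length_eq_of_surjective hf

theorem length_quotient_map_of_flat [IsLocalRing R] [IsLocalRing S] [IsLocalHom f] (hf : f.Flat)
    (hmax : (IsLocalRing.maximalIdeal R).map f = IsLocalRing.maximalIdeal S) (I : Ideal R) :
    Module.length S (S ⧸ I.map f) = Module.length R (R ⧸ I) := by
  algebraize [f]
  have hlength := IsLocalRing.length_baseChange R S (R ⧸ I)
  have : IsSimpleModule S (S ⧸ IsLocalRing.maximalIdeal S) :=
    isSimpleModule_iff_isCoatom.mpr (IsLocalRing.maximalIdeal.isMaximal S).out
  rwa [← (Algebra.TensorProduct.quotIdealMapEquivTensorQuot S I).toLinearEquiv.length_eq,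
    RingHom.algebraMap_toAlgebra, hmax,
    Module.length_eq_one S (S ⧸ IsLocalRing.maximalIdeal S), mul_one] at hlength

theorem map_map_localRingHom (P : Ideal R) (Q : Ideal S) [P.IsPrime] [Q.IsPrime]
    (h : P = Q.comap f) (I : Ideal R) :
    (I.map (algebraMap R (Localization.AtPrime P))).map (Localization.localRingHom P Q f h) =
      (I.map f).map (algebraMap S (Localization.AtPrime Q)) := by
  rw [Ideal.map_map, Ideal.map_map]
  congr 1
  ext x
  simp [Localization.localRingHom_to_map]

theorem localMult_map_of_flat (hf : f.Flat) (I : Ideal R) (Q : Ideal S) [Q.IsPrime]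
    (hQ : (Q.comap f).map f = Q) : localMult (I.map f) Q = localMult I (Q.comap f) := by
  let g := Localization.localRingHom (Q.comap f) Q f rfl
  have hmax : (IsLocalRing.maximalIdeal (Localization.AtPrime (Q.comap f))).map g =
      IsLocalRing.maximalIdeal (Localization.AtPrime Q) := by
    rw [← Localization.AtPrime.map_eq_maximalIdeal, map_map_localRingHom, hQ,
      Localization.AtPrime.map_eq_maximalIdeal]
  have : IsLocalHom g := Localization.isLocalHom_localRingHom _ _ _ _
  rw [localMult_eq_length, localMult_eq_length, ← map_map_localRingHom _ _ rfl,
    length_quotient_map_of_flat (hf.localRingHom Q _ rfl) hmax]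

theorem ker_localRingHom_of_surjective (hf : Function.Surjective f) (Q : Ideal S) [Q.IsPrime] :
    RingHom.ker (Localization.localRingHom (Q.comap f) Q f rfl) =
      (RingHom.ker f).map (algebraMap R (Localization.AtPrime (Q.comap f))) := by
  have hQ := Ideal.map_primeCompl_comap_of_surjective f hf Q
  have : IsLocalization ((Q.comap f).primeCompl.map f) (Localization.AtPrime Q) :=
    hQ.symm ▸ Localization.isLocalization
  exact IsLocalization.ker_map (Localization.AtPrime Q) f rfl

theorem localMult_comap_of_surjective (hf : Function.Surjective f) (I Q : Ideal S) [Q.IsPrime] :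
    localMult (I.comap f) (Q.comap f) = localMult I Q := by
  let g := Localization.localRingHom (Q.comap f) Q f rfl
  have hg : Function.Surjective g :=
    (RingHom.surjectiveOnStalks_of_surjective hf).localRingHom_surjective _ _ rfl
  have hcomap : (I.map (algebraMap S (Localization.AtPrime Q))).comap g =
      (I.comap f).map (algebraMap R (Localization.AtPrime (Q.comap f))) := by
    rw [← Ideal.map_comap_of_surjective f hf I, ← map_map_localRingHom _ _ rfl,
      Ideal.comap_map_of_surjective' g hg, ker_localRingHom_of_surjective hf,
      Ideal.map_comap_of_surjective f hf I]
    exact sup_eq_left.mpr (Ideal.map_mono (Ideal.comap_mono bot_le))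
  rw [localMult_eq_length, localMult_eq_length, ← hcomap, length_quotient_comap_of_surjective hg]

end Length

theorem comap_mem_minimalPrimes_of_flat {R S : Type*} [CommRing R] [CommRing S] {f : R →+* S}
    (hf : f.Flat) {I : Ideal R} {Q : Ideal S} (hQ : Q ∈ (I.map f).minimalPrimes) :
    Q.comap f ∈ I.minimalPrimes := by
  algebraize [f]
  have := hQ.isPrime
  refine ⟨⟨inferInstance, Ideal.map_le_iff_le_comap.mp hQ.le⟩, fun p ⟨hp, hIp⟩ hpQ => ?_⟩
  -- Going down holds for flat maps.
  obtain ⟨p', hp'Q, hp', hp'p⟩ := Ideal.exists_ideal_le_liesOver_of_le Q (q := Q.under R) hpQ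
  have hpp' : p = p'.comap f := hp'p.over
  have hQp' : Q ≤ p' := hQ.2 ⟨hp', Ideal.map_le_iff_le_comap.mpr (hpp' ▸ hIp)⟩ hp'Q
  exact hpp' ▸ Ideal.comap_mono hQp'

section Away

variable {R : Type*} [CommRing R] {x : R} {I P : Ideal R}

theorem under_map_algebraMap_away [hP : P.IsPrime] (hxP : x ∉ P) :
    (P.map (algebraMap R (Localization.Away x))).under R = P :=
  IsLocalization.under_map_of_isPrime_disjoint (Submonoid.powers x) _ hP
    ((Ideal.disjoint_powers_iff_notMem_of_isPrime x).mpr hxP)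

theorem map_algebraMap_away_mem_minimalPrimes (hP : P ∈ I.minimalPrimes) (hxP : x ∉ P) :
    P.map (algebraMap R (Localization.Away x)) ∈
      (I.map (algebraMap R (Localization.Away x))).minimalPrimes := by
  have := hP.isPrime
  rwa [IsLocalization.minimalPrimes_map (Submonoid.powers x), Set.mem_preimage,
    under_map_algebraMap_away hxP]

theorem isPrime_map_algebraMap_away [hP : P.IsPrime] (hxP : x ∉ P) :
    (P.map (algebraMap R (Localization.Away x))).IsPrime :=
  IsLocalization.isPrime_of_isPrime_disjoint (Submonoid.powers x) _ P hP
    ((Ideal.disjoint_powers_iff_notMem_of_isPrime x).mpr hxP)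

theorem localMult_map_algebraMap_away [P.IsPrime] (hxP : x ∉ P) :
    localMult (I.map (algebraMap R (Localization.Away x)))
      (P.map (algebraMap R (Localization.Away x))) = localMult I P := by
  have hflat : (algebraMap R (Localization.Away x)).Flat :=
    RingHom.flat_algebraMap_iff.mpr (IsLocalization.flat _ (Submonoid.powers x))
  have := isPrime_map_algebraMap_away hxP
  have hcomap := under_map_algebraMap_away hxP
  rw [localMult_map_of_flat hflat I _ (congrArg _ hcomap)]
  exact congrArg _ hcomap

end Away

theorem notMem_of_mem_minimalPrimes_of_mk_mem_nonZeroDivisors {R : Type*} [CommRing R]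
    {I P : Ideal R} (hP : P ∈ I.minimalPrimes) {x : R}
    (hx : Ideal.Quotient.mk I x ∈ nonZeroDivisors (R ⧸ I)) : x ∉ P := by
  rw [Ideal.minimalPrimes_eq_comap] at hP
  obtain ⟨p, hp, rfl⟩ := hP
  exact fun hxp => notMem_nonZeroDivisors_of_mem_mem_minimalPrimes (Ideal.mem_comap.mp hxp) hp hx

theorem isHomogeneous_of_mem_minimalPrimes {ι σ A : Type*} [CommRing A] [AddCommMonoid ι]
    [LinearOrder ι] [IsOrderedCancelAddMonoid ι] [SetLike σ A] [AddSubmonoidClass σ A]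
    (𝒜 : ι → σ) [GradedRing 𝒜] {I P : Ideal A} (hI : I.IsHomogeneous 𝒜)
    (hP : P ∈ I.minimalPrimes) : P.IsHomogeneous 𝒜 := by
  have hcore : I ≤ (P.homogeneousCore 𝒜).toIdeal :=
    hI.toIdeal_homogeneousCore_eq_self ▸ Ideal.homogeneousCore_mono 𝒜 hP.le
  have hle := Ideal.toIdeal_homogeneousCore_le 𝒜 P
  exact (Ideal.IsHomogeneous.iff_eq 𝒜 P).mpr
    (hle.antisymm (hP.2 ⟨hP.isPrime.homogeneousCore, hcore⟩ hle))

section HomogeneousSubmodule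

attribute [local instance] MvPolynomial.gradedAlgebra

theorem isHomogeneous_homogeneousSubmodule_iff {σ K : Type*} [CommSemiring K]
    {I : Ideal (MvPolynomial σ K)} :
    I.IsHomogeneous (homogeneousSubmodule σ K) ↔ ∀ f ∈ I, ∀ d, homogeneousComponent d f ∈ I := by
  simp only [← decomposition.decompose'_apply]
  exact ⟨fun hI f hf d => hI d hf, fun hI d f hf => hI f hf d⟩

end HomogeneousSubmodule

theorem faithfullyFlat_laurentPolynomial_C {S : Type*} [CommRing S] :
    (LaurentPolynomial.C : S →+* LaurentPolynomial S).FaithfullyFlat := by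
  have : Module.FaithfullyFlat S (LaurentPolynomial S) :=
    Module.FaithfullyFlat.of_linearEquiv _ _ (AddMonoidAlgebra.coeffLinearEquiv S)
  exact RingHom.faithfullyFlat_algebraMap_iff.mpr this

theorem laurentPolynomial_ringHom_ext {S B : Type*} [CommSemiring S] [CommSemiring B]
    {f g : LaurentPolynomial S →+* B} (hC : f.comp LaurentPolynomial.C = g.comp LaurentPolynomial.C)
    (hT : f (LaurentPolynomial.T 1) = g (LaurentPolynomial.T 1)) : f = g := by
  refine IsLocalization.ringHom_ext (Submonoid.powers (Polynomial.X : Polynomial S))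
    (Polynomial.ringHom_ext (fun a => ?_) ?_)
  · simpa using RingHom.congr_fun hC a
  · simpa using hT

section DegreeTwist

variable {A B σ : Type*} [CommSemiring A] [CommSemiring B] [SetLike σ A] [AddSubmonoidClass σ A]
  (𝒜 : ℕ → σ) [GradedRing 𝒜]

/-- The twist of a ring homomorphism `f` on a graded ring by powers of `c`: on the component of
degree `i` it is `a ↦ f a * c ^ i`. -/
def degreeTwist (f : A →+* B) (c : B) : A →+* B :=
  (DirectSum.toSemiring
      (fun i => (AddMonoidHom.mulRight (c ^ i)).comp
        (f.toAddMonoidHom.comp (AddSubmonoidClass.subtype (𝒜 i))))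
      (by simp [SetLike.coe_gOne])
      (by
        intro i j a b
        simp [SetLike.coe_gMul, pow_add, mul_mul_mul_comm])).comp
    (DirectSum.decomposeRingEquiv 𝒜).toRingHom

variable {𝒜}

theorem degreeTwist_apply_of_mem (f : A →+* B) (c : B) {i : ℕ} {a : A} (ha : a ∈ 𝒜 i) :
    degreeTwist 𝒜 f c a = f a * c ^ i := by
  have hdecompose : (DirectSum.decomposeRingEquiv 𝒜).toRingHom a =
      DirectSum.of (fun i => 𝒜 i) i ⟨a, ha⟩ := DirectSum.decompose_of_mem 𝒜 ha
  rw [degreeTwist, RingHom.comp_apply, hdecompose]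
  exact DirectSum.toSemiring_of (A := fun i => 𝒜 i) _ _ _ i ⟨a, ha⟩

theorem ringHom_ext_of_homogeneous {f g : A →+* B} (h : ∀ i, ∀ a ∈ 𝒜 i, f a = g a) : f = g := by
  ext a
  induction a using DirectSum.Decomposition.inductionOn 𝒜 with
  | zero => simp
  | homogeneous a => exact h _ a a.2
  | add a b ha hb => rw [map_add, map_add, ha, hb]

theorem map_degreeTwist_of_isUnit (f : A →+* B) {c : B} (hc : IsUnit c) {I : Ideal A}
    (hI : I.IsHomogeneous 𝒜) : I.map (degreeTwist 𝒜 f c) = I.map f := by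
  obtain ⟨s, rfl⟩ := (Ideal.IsHomogeneous.iff_exists 𝒜 I).mp hI
  have hspan : ∀ a : SetLike.homogeneousSubmonoid 𝒜,
      Ideal.span {degreeTwist 𝒜 f c a} = Ideal.span {f a} := by
    rintro ⟨a, i, ha⟩
    rw [degreeTwist_apply_of_mem f c ha, Ideal.span_singleton_mul_right_unit (hc.pow i)]
  rw [Set.image_eq_iUnion]
  simp only [Ideal.span_iUnion, Ideal.map_iSup, Ideal.map_span, Set.image_singleton, hspan]

end DegreeTwist

section Dehomogenization

open scoped LaurentPolynomial

variable {A σ : Type*} [CommRing A] [SetLike σ A] [AddSubmonoidClass σ A]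
  (𝒜 : ℕ → σ) [GradedRing 𝒜] {l : A}

/-- The homomorphism `A ⧸ ⟨l - 1⟩ → A_l` that rehomogenizes to degree `0`: for `l` of degree `1`,
it sends the class of `a` of degree `i` to `a / l ^ i`. -/
def rehomogenize (hl : l ∈ 𝒜 1) : A ⧸ Ideal.span {l - 1} →+* Localization.Away l :=
  Ideal.Quotient.lift _
    (degreeTwist 𝒜 (algebraMap A (Localization.Away l)) (IsLocalization.Away.invSelf l)) <|
    show Ideal.span {l - 1} ≤ RingHom.ker _ by
      rw [Ideal.span_singleton_le_iff_mem, RingHom.mem_ker, map_sub, map_one,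
        degreeTwist_apply_of_mem _ _ hl, pow_one, IsLocalization.Away.mul_invSelf, sub_self]

variable {𝒜}

theorem rehomogenize_mk (hl : l ∈ 𝒜 1) {i : ℕ} {a : A} (ha : a ∈ 𝒜 i) :
    rehomogenize 𝒜 hl (Ideal.Quotient.mk _ a) =
      algebraMap A (Localization.Away l) a * IsLocalization.Away.invSelf l ^ i :=
  degreeTwist_apply_of_mem _ _ ha

/-- The homomorphism `A → (A ⧸ ⟨l - 1⟩)[T;T⁻¹]` recording degrees in the exponent of `T`: it sends
`a` of degree `i` to `a T ^ i`. -/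
def gradedDehomogenize (𝒜 : ℕ → σ) [GradedRing 𝒜] (l : A) :
    A →+* (A ⧸ Ideal.span {l - 1})[T;T⁻¹] :=
  degreeTwist 𝒜 (LaurentPolynomial.C.comp (Ideal.Quotient.mk _)) (LaurentPolynomial.T 1)

theorem gradedDehomogenize_of_mem {i : ℕ} {a : A} (ha : a ∈ 𝒜 i) :
    gradedDehomogenize 𝒜 l a =
      LaurentPolynomial.C (Ideal.Quotient.mk _ a) * LaurentPolynomial.T 1 ^ i :=
  degreeTwist_apply_of_mem _ _ ha

theorem gradedDehomogenize_self (hl : l ∈ 𝒜 1) :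
    gradedDehomogenize 𝒜 l l = LaurentPolynomial.T 1 := by
  have hmk : Ideal.Quotient.mk (Ideal.span {l - 1}) l = 1 :=
    Ideal.Quotient.eq.mpr (Ideal.mem_span_singleton_self _)
  rw [gradedDehomogenize_of_mem hl, hmk, map_one, one_mul, pow_one]

theorem isUnit_gradedDehomogenize_self (hl : l ∈ 𝒜 1) : IsUnit (gradedDehomogenize 𝒜 l l) :=
  gradedDehomogenize_self hl ▸ LaurentPolynomial.isUnit_T 1

/-- The extension of `gradedDehomogenize` to the localization `A_l`; it sends `l` to `T`. -/
def awayToLaurent (hl : l ∈ 𝒜 1) : Localization.Away l →+* (A ⧸ Ideal.span {l - 1})[T;T⁻¹] :=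
  IsLocalization.Away.lift l (isUnit_gradedDehomogenize_self hl)

theorem awayToLaurent_algebraMap (hl : l ∈ 𝒜 1) (a : A) :
    awayToLaurent hl (algebraMap A (Localization.Away l) a) = gradedDehomogenize 𝒜 l a :=
  IsLocalization.Away.lift_eq l (isUnit_gradedDehomogenize_self hl) a

theorem awayToLaurent_rehomogenize (hl : l ∈ 𝒜 1) (b : A ⧸ Ideal.span {l - 1}) :
    awayToLaurent hl (rehomogenize 𝒜 hl b) = LaurentPolynomial.C b := by
  suffices h : (awayToLaurent hl).comp (rehomogenize 𝒜 hl) = LaurentPolynomial.C from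
    RingHom.congr_fun h b
  refine Ideal.Quotient.ringHom_ext (ringHom_ext_of_homogeneous (𝒜 := 𝒜) fun i a ha => ?_)
  have hinv : LaurentPolynomial.T 1 *
      awayToLaurent hl (IsLocalization.Away.invSelf l : Localization.Away l) = 1 := by
    rw [← gradedDehomogenize_self hl, ← awayToLaurent_algebraMap hl, ← map_mul,
      IsLocalization.Away.mul_invSelf, map_one]
  simp only [RingHom.comp_apply, rehomogenize_mk hl ha, map_mul, map_pow,
    awayToLaurent_algebraMap, gradedDehomogenize_of_mem ha]
  rw [mul_assoc, ← mul_pow, hinv, one_pow, mul_one]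

/-- The homomorphism `(A ⧸ ⟨l - 1⟩)[T;T⁻¹] → A_l` that extends `rehomogenize` by `T ↦ l`. -/
def laurentToAway (hl : l ∈ 𝒜 1) : (A ⧸ Ideal.span {l - 1})[T;T⁻¹] →+* Localization.Away l :=
  LaurentPolynomial.eval₂ (rehomogenize 𝒜 hl) (IsLocalization.Away.algebraMap_isUnit l).unit

theorem laurentToAway_C (hl : l ∈ 𝒜 1) (b : A ⧸ Ideal.span {l - 1}) :
    laurentToAway hl (LaurentPolynomial.C b) = rehomogenize 𝒜 hl b :=
  LaurentPolynomial.eval₂_C _ _ b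

theorem laurentToAway_T_one (hl : l ∈ 𝒜 1) :
    laurentToAway hl (LaurentPolynomial.T 1) = algebraMap A (Localization.Away l) l := by
  rw [laurentToAway, LaurentPolynomial.eval₂_T, zpow_one, IsUnit.unit_spec]

theorem awayToLaurent_comp_laurentToAway (hl : l ∈ 𝒜 1) :
    (awayToLaurent hl).comp (laurentToAway hl) = RingHom.id _ := by
  refine laurentPolynomial_ringHom_ext (RingHom.ext fun b => ?_) ?_
  · simp only [RingHom.comp_apply, laurentToAway_C, awayToLaurent_rehomogenize, RingHom.id_apply]
  · simp only [RingHom.comp_apply, laurentToAway_T_one, awayToLaurent_algebraMap,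
      gradedDehomogenize_self hl, RingHom.id_apply]

theorem laurentToAway_comp_awayToLaurent (hl : l ∈ 𝒜 1) :
    (laurentToAway hl).comp (awayToLaurent hl) = RingHom.id _ := by
  refine IsLocalization.ringHom_ext (Submonoid.powers l)
    (ringHom_ext_of_homogeneous (𝒜 := 𝒜) fun i a ha => ?_)
  simp only [RingHom.comp_apply, awayToLaurent_algebraMap, gradedDehomogenize_of_mem ha,
    map_mul, map_pow, laurentToAway_C, laurentToAway_T_one, rehomogenize_mk hl ha, RingHom.id_apply]
  rw [mul_assoc, ← mul_pow, mul_comm (IsLocalization.Away.invSelf l),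
    IsLocalization.Away.mul_invSelf, one_pow, mul_one]

theorem laurentToAway_bijective (hl : l ∈ 𝒜 1) : Function.Bijective (laurentToAway hl) :=
  (RingEquiv.ofRingHom _ _ (laurentToAway_comp_awayToLaurent hl)
    (awayToLaurent_comp_laurentToAway hl)).bijective

theorem faithfullyFlat_rehomogenize (hl : l ∈ 𝒜 1) : (rehomogenize 𝒜 hl).FaithfullyFlat := by
  have hcomp : (laurentToAway hl).comp LaurentPolynomial.C = rehomogenize 𝒜 hl :=
    RingHom.ext (laurentToAway_C hl)
  exact hcomp ▸ RingHom.FaithfullyFlat.stableUnderComposition _ _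
    faithfullyFlat_laurentPolynomial_C (.of_bijective (laurentToAway_bijective hl))

theorem map_rehomogenize_map_mk (hl : l ∈ 𝒜 1) {I : Ideal A} (hI : I.IsHomogeneous 𝒜) :
    (I.map (Ideal.Quotient.mk (Ideal.span {l - 1}))).map (rehomogenize 𝒜 hl) =
      I.map (algebraMap A (Localization.Away l)) := by
  rw [Ideal.map_map]
  exact map_degreeTwist_of_isUnit _ (.of_mul_eq_one_right _ (IsLocalization.Away.mul_invSelf l)) hI

variable {J P : Ideal A}

theorem comap_rehomogenize_map_algebraMap (hl : l ∈ 𝒜 1) (hP : P.IsHomogeneous 𝒜) :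
    (P.map (algebraMap A (Localization.Away l))).comap (rehomogenize 𝒜 hl) =
      P.map (Ideal.Quotient.mk (Ideal.span {l - 1})) := by
  have hflat := faithfullyFlat_rehomogenize hl
  rw [← map_rehomogenize_map_mk hl hP]
  algebraize [rehomogenize 𝒜 hl]
  exact Ideal.comap_map_eq_self_of_faithfullyFlat _

theorem map_mk_mem_minimalPrimes (hl : l ∈ 𝒜 1) (hJ : J.IsHomogeneous 𝒜)
    (hP : P ∈ J.minimalPrimes) (hlP : l ∉ P) :
    P.map (Ideal.Quotient.mk (Ideal.span {l - 1})) ∈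
      (J.map (Ideal.Quotient.mk (Ideal.span {l - 1}))).minimalPrimes := by
  rw [← comap_rehomogenize_map_algebraMap hl (isHomogeneous_of_mem_minimalPrimes 𝒜 hJ hP)]
  refine comap_mem_minimalPrimes_of_flat (faithfullyFlat_rehomogenize hl).flat ?_
  rw [map_rehomogenize_map_mk hl hJ]
  exact map_algebraMap_away_mem_minimalPrimes hP hlP

theorem localMult_map_mk [P.IsPrime] (hl : l ∈ 𝒜 1) (hJ : J.IsHomogeneous 𝒜)
    (hP : P.IsHomogeneous 𝒜) (hlP : l ∉ P) :
    localMult (J.map (Ideal.Quotient.mk (Ideal.span {l - 1})))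
      (P.map (Ideal.Quotient.mk (Ideal.span {l - 1}))) = localMult J P := by
  have := isPrime_map_algebraMap_away hlP
  have hcomap := comap_rehomogenize_map_algebraMap hl hP
  rw [← localMult_map_algebraMap_away hlP, ← map_rehomogenize_map_mk hl hJ,
    localMult_map_of_flat (faithfullyFlat_rehomogenize hl).flat, hcomap]
  rw [hcomap, map_rehomogenize_map_mk hl hP]

theorem minimalPrime_multiplicity_dehomogenize_general (hl : l ∈ 𝒜 1) (hJ : J.IsHomogeneous 𝒜)
    (hP : P ∈ J.minimalPrimes) (hlP : l ∉ P) :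
    P ⊔ Ideal.span {l - 1} ∈ (J ⊔ Ideal.span {l - 1}).minimalPrimes ∧
      localMult (J ⊔ Ideal.span {l - 1}) (P ⊔ Ideal.span {l - 1}) = localMult J P := by
  have hmk := Ideal.Quotient.mk_surjective (I := Ideal.span {l - 1})
  have hmin := map_mk_mem_minimalPrimes hl hJ hP hlP
  have := hP.isPrime
  have := hmin.isPrime
  simp only [sup_comm _ (Ideal.span {l - 1}), ← Ideal.comap_map_quotientMk]
  refine ⟨Ideal.minimalPrimes_comap_of_surjective hmk hmin, ?_⟩
  rw [localMult_comap_of_surjective hmk,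
    localMult_map_mk hl hJ (isHomogeneous_of_mem_minimalPrimes 𝒜 hJ hP) hlP]

end Dehomogenization

/-- If `P` is a minimal prime over a homogeneous ideal `J` with multiplicity `m` and `l` is a
linear form which is not a zero-divisor on `R ⧸ J`, then `P + ⟨l − 1⟩` is a minimal prime over
`J + ⟨l − 1⟩` with the same multiplicity `m`. -/
theorem minimalPrime_multiplicity_dehomogenize {n : ℕ}
    (J : Ideal (MvPolynomial (Fin (n + 1)) ℂ))
    (hJhom : ∀ f ∈ J, ∀ d : ℕ, homogeneousComponent d f ∈ J)
    (l : MvPolynomial (Fin (n + 1)) ℂ) (hl : l.IsHomogeneous 1)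
    (hnzd : Ideal.Quotient.mk J l ∈
      nonZeroDivisors (MvPolynomial (Fin (n + 1)) ℂ ⧸ J))
    (P : Ideal (MvPolynomial (Fin (n + 1)) ℂ)) (hP : P ∈ J.minimalPrimes)
    (m : ℕ) (hm : localMult J P = ((m : ℕ∞) : WithBot ℕ∞)) :
    P ⊔ Ideal.span {l - 1} ∈ (J ⊔ Ideal.span {l - 1}).minimalPrimes ∧
      localMult (J ⊔ Ideal.span {l - 1}) (P ⊔ Ideal.span {l - 1}) =
        ((m : ℕ∞) : WithBot ℕ∞) := by
  let := gradedAlgebra (σ := Fin (n + 1)) (R := ℂ)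
  exact hm ▸ minimalPrime_multiplicity_dehomogenize_general (𝒜 := homogeneousSubmodule _ ℂ) hl
    (isHomogeneous_homogeneousSubmodule_iff.mpr hJhom) hP
    (notMem_of_mem_minimalPrimes_of_mk_mem_nonZeroDivisors hP hnzd)

end
end

section
/- Suppose no coordinate variable x_i lies in J, v ∈ (ℂ*)^{n+1} satisfies the patch condition for J, and set Î = J + ⟨v_0 x_0 + … + v_n x_n − 1⟩ ⊆ ℂ[x_0,…,x_n]. Let w ∈ ℤ^{n+1} satisfy w_i ≤ 0 for all i, w_j = 0 for some j, w_k ≠ 0 for some k, and assume the ideal generated by In_w(Î) in ℂ[x_0^{±1},…,x_n^{±1}] is proper. Set u = (w_1 − w_0, …, w_n − w_0) ∈ ℤ^n. Then the tropical multiplicity of In_w(Î) in the Laurent polynomial ring ℂ[x_0^{±1},…,x_n^{±1}] equals the tropical multiplicity of In_u(I) in the Laurent polynomial ring ℂ[x_1^{±1},…,x_n^{±1}]. -/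
open MvPolynomial
open scoped Classical

noncomputable section

/-- The weight `w · α` of an exponent vector `α`. -/
def wdeg {n : ℕ} (w : Fin n → ℝ) (α : Fin n →₀ ℕ) : ℝ := ∑ i, w i * (α i : ℝ)

/-- The initial form `In_w(f)` of a polynomial: the sum of the terms of `f` whose
`w`-weight is maximal over the support of `f` (and `In_w(0) = 0`). -/
def initialForm {R : Type*} [CommSemiring R] {n : ℕ} (w : Fin n → ℝ)
    (f : MvPolynomial (Fin n) R) : MvPolynomial (Fin n) R :=
  ∑ α ∈ f.support.filter (fun α => ∀ β ∈ f.support, wdeg w β ≤ wdeg w α),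
    monomial α (coeff α f)

/-- The initial ideal `In_w(I)`: the ideal generated by the initial forms of elements of `I`. -/
def initialIdeal {R : Type*} [CommRing R] {n : ℕ} (w : Fin n → ℝ)
    (I : Ideal (MvPolynomial (Fin n) R)) : Ideal (MvPolynomial (Fin n) R) :=
  Ideal.span {g | ∃ f ∈ I, g = initialForm w f}

/-- The Laurent polynomial ring in `n` variables over `R`. -/
abbrev MvLaurent (n : ℕ) (R : Type*) [CommRing R] : Type _ :=
  AddMonoidAlgebra R (Fin n →₀ ℤ)

/-- The canonical ring map from the polynomial ring to the Laurent polynomial ring. -/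
def polyToLaurent {n : ℕ} {R : Type*} [CommRing R] :
    MvPolynomial (Fin n) R →+* MvLaurent n R :=
  AddMonoidAlgebra.mapDomainRingHom R
    (Finsupp.mapRange.addMonoidHom (Nat.castAddMonoidHom ℤ))

/-- `v` satisfies the patch condition for a homogeneous ideal `J ⊆ ℂ[x₀,…,xₙ]`:
every nonzero common zero of `J` having some zero coordinate satisfies `v · a ≠ 0`. -/
def PatchCond {n : ℕ} (J : Ideal (MvPolynomial (Fin (n + 1)) ℂ)) (v : Fin (n + 1) → ℂ) : Prop :=
  ∀ a : Fin (n + 1) → ℂ, a ≠ 0 → (∀ g ∈ J, eval a g = 0) → (∃ i, a i = 0) →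
    ∑ i, v i * a i ≠ 0

/-- The homogeneous vanishing ideal of the projective closure of the affine variety of `I`:
the ideal generated by all homogeneous `F` with dehomogenization `F(1,x₁,…,xₙ) ∈ I`. -/
def projClosureIdeal {n : ℕ} (I : Ideal (MvPolynomial (Fin n) ℂ)) :
    Ideal (MvPolynomial (Fin (n + 1)) ℂ) :=
  Ideal.span {F | (∃ d, F.IsHomogeneous d) ∧
    aeval (Fin.cons (1 : MvPolynomial (Fin n) ℂ) X) F ∈ I}

/-- The tropical multiplicity of an ideal `A` of the polynomial ring: the sum over the
minimal primes `P` of the ideal `A^±` generated by `A` in the Laurent polynomial ring of the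
length of the `L_P`-module `(L ⧸ A^±)_P`. -/
def tropMult {n : ℕ} (A : Ideal (MvPolynomial (Fin n) ℂ)) : WithBot ℕ∞ :=
  ∑ᶠ P ∈ (Ideal.map polyToLaurent A).minimalPrimes, localMult (Ideal.map polyToLaurent A) P

/-!
The tropical multiplicity of `A` depends only on the coordinate ring `L / A^±` of the subscheme of
the torus defined by `A`, so it suffices to compare coordinate rings. Write `ℓ = v · x`, let `ℓ₀` be
the part of `ℓ` of weight `0`, and let `H = In_w(J)`. Homogenizing with `ℓ` shows
`In_w(J + ⟨ℓ - 1⟩) = H + ⟨ℓ₀ - 1⟩`, and setting `x₀ = 1` turns `H` into `In_u(I)`. Thus the two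
subschemes are the slices `ℓ₀ = 1` and `x₀ = 1` of the cone defined by `H`, and they are isomorphic
by rescaling as soon as `ℓ₀` vanishes nowhere on the second one. This is the patch condition: since
`w ≤ 0`, replacing the coordinates of nonzero weight by `0` turns a zero `b` of `H` in the torus
into a nonzero zero `a` of `J` with a zero coordinate and `ℓ(a) = ℓ₀(b)`.
-/

/-! ### Multiplicities depend only on the quotient ring -/

section Multiplicity

variable {R B : Type*} [CommRing R] [CommRing B] {f : R →+* B}

section Semilinear

variable {M N : Type*} [AddCommGroup M] [Module R M] [AddCommGroup N] [Module B N]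

/-- The map induced on localizations by a map of modules that is semilinear over a ring
homomorphism. -/
def localizedSemilinearMap {S : Submonoid R} {T : Submonoid B} (hST : S ≤ T.comap f)
    (g : M →ₛₗ[f] N) :
    LocalizedModule S M →ₛₗ[(IsLocalization.map (Localization T) f hST :
      Localization S →+* Localization T)] LocalizedModule T N where
  toFun x := x.liftOn (fun y => .mk (g y.1) ⟨f y.2, hST y.2.2⟩) <| by
    rintro ⟨m, s⟩ ⟨m', s'⟩ ⟨u, hu⟩
    refine LocalizedModule.mk_eq.2 ⟨⟨f u, hST u.2⟩, ?_⟩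
    simpa only [Submonoid.smul_def, map_smulₛₗ] using congrArg g hu
  map_add' x y := by
    induction x, y using LocalizedModule.induction_on₂ with | _ m m' s s'
    simp only [LocalizedModule.mk_add_mk, LocalizedModule.liftOn_mk, map_add, Submonoid.smul_def,
      map_smulₛₗ, Submonoid.coe_mul, map_mul]
    rfl
  map_smul' a x := by
    induction x using LocalizedModule.induction_on with | _ m s
    induction a using Localization.induction_on with | _ a
    rw [LocalizedModule.mk_smul_mk, Localization.mk_eq_mk'_apply, IsLocalization.map_mk',
      ← Localization.mk_eq_mk'_apply]
    simp only [LocalizedModule.liftOn_mk, LocalizedModule.mk_smul_mk, map_smulₛₗ,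
      Submonoid.coe_mul, map_mul]
    rfl

lemma localizedSemilinearMap_bijective (hf : Function.Surjective f) (T : Submonoid B)
    {g : M →ₛₗ[f] N} (hg : Function.Bijective g) :
    Function.Bijective (localizedSemilinearMap (le_refl (T.comap f)) g) := by
  constructor
  · intro x y hxy
    induction x, y using LocalizedModule.induction_on₂ with | _ m m' s s'
    obtain ⟨⟨u, hu⟩, h⟩ := LocalizedModule.mk_eq.1 hxy
    obtain ⟨u, rfl⟩ := hf u
    refine LocalizedModule.mk_eq.2 ⟨⟨u, hu⟩, hg.1 ?_⟩
    simpa only [Submonoid.smul_def, map_smulₛₗ] using h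
  · intro y
    induction y using LocalizedModule.induction_on with | _ m s
    obtain ⟨m, rfl⟩ := hg.2 m
    obtain ⟨s, hs⟩ := s
    obtain ⟨s, rfl⟩ := hf s
    exact ⟨.mk m ⟨s, hs⟩, rfl⟩

lemma moduleLength_localizedModule_comap (hf : Function.Surjective f) (T : Submonoid B)
    {g : M →ₛₗ[f] N} (hg : Function.Bijective g) :
    moduleLength (Localization (T.comap f)) (LocalizedModule (T.comap f) M) =
      moduleLength (Localization T) (LocalizedModule T N) := by
  have : RingHomSurjective (IsLocalization.map (Localization T) f (le_refl (T.comap f)) :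
      Localization (T.comap f) →+* Localization T) := by
    refine ⟨fun y => ?_⟩
    induction y using Localization.induction_on with | _ y
    obtain ⟨y, s, hs⟩ := y
    obtain ⟨y, rfl⟩ := hf y
    obtain ⟨s, rfl⟩ := hf s
    refine ⟨Localization.mk y ⟨s, hs⟩, ?_⟩
    rw [Localization.mk_eq_mk'_apply, IsLocalization.map_mk', Localization.mk_eq_mk'_apply]
  exact Order.krullDim_eq_of_orderIso (Submodule.orderIsoMapComapOfBijective _
    (localizedSemilinearMap_bijective hf T hg))

end Semilinear

lemma localMult_comap (hf : Function.Surjective f) (A p : Ideal B) [hp : p.IsPrime] :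
    localMult (A.comap f) (p.comap f) = localMult A p := by
  let g : (R ⧸ A.comap f) →ₛₗ[f] B ⧸ A :=
    { toFun := Ideal.quotientMap A f le_rfl
      map_add' := map_add _
      map_smul' := fun r x => by
        obtain ⟨x, rfl⟩ := Ideal.Quotient.mk_surjective x
        simp only [Algebra.smul_def, map_mul, Ideal.Quotient.algebraMap_eq, Ideal.quotientMap_mk] }
  have hg : Function.Bijective g :=
    ⟨Ideal.quotientMap_injective, Ideal.quotientMap_surjective (H := le_rfl) hf⟩
  rw [localMult, localMult, dif_pos (Ideal.comap_isPrime f p), dif_pos hp]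
  exact moduleLength_localizedModule_comap hf p.primeCompl hg

lemma finsum_localMult_comap (hf : Function.Surjective f) (A : Ideal B) :
    ∑ᶠ P ∈ (A.comap f).minimalPrimes, localMult (A.comap f) P =
      ∑ᶠ P ∈ A.minimalPrimes, localMult A P := by
  symm
  refine finsum_mem_eq_of_bijOn (Ideal.comap f) ?_ fun P hP => ?_
  · rw [Ideal.comap_minimalPrimes_eq_of_surjective hf A]
    exact (Ideal.comap_injective_of_surjective f hf).injOn.bijOn_image
  · have := hP.1.1
    exact (localMult_comap hf A P).symm

lemma finsum_localMult_eq_of_ringEquiv {A : Ideal R} {A' : Ideal B} (e : R ⧸ A ≃+* B ⧸ A') :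
    ∑ᶠ P ∈ A.minimalPrimes, localMult A P = ∑ᶠ P ∈ A'.minimalPrimes, localMult A' P := by
  let π : R →+* B ⧸ A' := (e : R ⧸ A →+* B ⧸ A').comp (Ideal.Quotient.mk A)
  have hπ : Function.Surjective π := e.surjective.comp Ideal.Quotient.mk_surjective
  have hA : A = (⊥ : Ideal (B ⧸ A')).comap π := by
    ext x
    simp [π, Ideal.Quotient.eq_zero_iff_mem]
  have hA' : A' = (⊥ : Ideal (B ⧸ A')).comap (Ideal.Quotient.mk A') := by
    ext x
    simp [Ideal.Quotient.eq_zero_iff_mem]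
  calc ∑ᶠ P ∈ A.minimalPrimes, localMult A P
      = ∑ᶠ P ∈ (⊥ : Ideal (B ⧸ A')).minimalPrimes, localMult ⊥ P := by
        rw [hA, finsum_localMult_comap hπ]
    _ = ∑ᶠ P ∈ A'.minimalPrimes, localMult A' P := by
        rw [← finsum_localMult_comap Ideal.Quotient.mk_surjective, ← hA']

end Multiplicity

/-! ### Leading parts with respect to a weight -/

section LeadingPart

variable {K : Type*} [CommRing K] {n : ℕ}

lemma wdeg_eq_weight (w : Fin n → ℝ) (α : Fin n →₀ ℕ) : wdeg w α = Finsupp.weight w α := by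
  simp [wdeg, Finsupp.weight_apply, Finsupp.sum_fintype, mul_comm]

lemma wdeg_zero (w : Fin n → ℝ) : wdeg w 0 = 0 := by
  rw [wdeg_eq_weight, map_zero]

lemma wdeg_add (w : Fin n → ℝ) (α β : Fin n →₀ ℕ) :
    wdeg w (α + β) = wdeg w α + wdeg w β := by
  simp only [wdeg_eq_weight, map_add]

lemma wdeg_nonpos {w : Fin n → ℝ} (hw : ∀ i, w i ≤ 0) (α : Fin n →₀ ℕ) : wdeg w α ≤ 0 :=
  Finset.sum_nonpos fun i _ => mul_nonpos_of_nonpos_of_nonneg (hw i) (Nat.cast_nonneg _)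

lemma mem_restrictSupport_iff_coeff {s : Set (Fin n →₀ ℕ)} {f : MvPolynomial (Fin n) K} :
    f ∈ restrictSupport K s ↔ ∀ α ∉ s, coeff α f = 0 := by
  simp only [mem_restrictSupport_iff, Set.subset_def, Finset.mem_coe, mem_support_iff]
  exact forall_congr' fun α => not_imp_comm

lemma map_mem_of_mem_restrictSupport {M : Type*} [AddCommGroup M] [Module K M]
    {s : Set (Fin n →₀ ℕ)} (T : MvPolynomial (Fin n) K →ₗ[K] M) {N : Submodule K M}
    (h : ∀ α ∈ s, T (monomial α 1) ∈ N) {f : MvPolynomial (Fin n) K}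
    (hf : f ∈ restrictSupport K s) : T f ∈ N := by
  have hle : restrictSupport K s ≤ N.comap T := by
    rw [restrictSupport_eq_span, Submodule.span_le]
    rintro _ ⟨α, hα, rfl⟩
    exact h α hα
  exact hle hf

open scoped Pointwise in
lemma mul_mem_restrictSupport {s t u : Set (Fin n →₀ ℕ)} {p q : MvPolynomial (Fin n) K}
    (hp : p ∈ restrictSupport K s) (hq : q ∈ restrictSupport K t) (h : s + t ⊆ u) :
    p * q ∈ restrictSupport K u :=
  restrictSupport_mono K h (restrictSupport_add K s t ▸ Submodule.mul_mem_mul hp hq)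

/-- `g` is the part of `f` of weight `m`, and all terms of `f` have weight at most `m`. Unlike
`initialForm w f`, the part `g` may vanish, so the notion is compatible with sums and products. -/
structure HasLeadingPart (w : Fin n → ℝ) (m : ℝ) (f g : MvPolynomial (Fin n) K) : Prop where
  part_mem : g ∈ restrictSupport K {α | wdeg w α = m}
  rest_mem : f - g ∈ restrictSupport K {α | wdeg w α < m}

variable {w : Fin n → ℝ} {m m' : ℝ} {f g f' g' : MvPolynomial (Fin n) K}

lemma hasLeadingPart_iff : HasLeadingPart w m f g ↔
    f ∈ restrictSupport K {α | wdeg w α ≤ m} ∧ g = weightedHomogeneousComponent w m f := by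
  have hcoeff (α) : coeff α (weightedHomogeneousComponent w m f) =
      if wdeg w α = m then coeff α f else 0 := by
    rw [coeff_weightedHomogeneousComponent, wdeg_eq_weight]
  constructor
  · rintro ⟨hg, hfg⟩
    have hf : f ∈ restrictSupport K {α | wdeg w α ≤ m} := by
      rw [← sub_add_cancel f g]
      have hlt : {α | wdeg w α < m} ⊆ {α | wdeg w α ≤ m} :=
        Set.ofPred_subset_ofPred.2 fun α => le_of_lt
      have heq : {α | wdeg w α = m} ⊆ {α | wdeg w α ≤ m} :=
        Set.ofPred_subset_ofPred.2 fun α => le_of_eq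
      exact add_mem (restrictSupport_mono K hlt hfg) (restrictSupport_mono K heq hg)
    refine ⟨hf, MvPolynomial.ext _ _ fun α => ?_⟩
    rw [hcoeff]
    split_ifs with hα
    · have := mem_restrictSupport_iff_coeff.1 hfg α fun h : wdeg w α < m => h.ne hα
      rw [coeff_sub, sub_eq_zero] at this
      exact this.symm
    · exact mem_restrictSupport_iff_coeff.1 hg α hα
  · rintro ⟨hf, rfl⟩
    refine ⟨mem_restrictSupport_iff_coeff.2 fun α hα => ?_,
      mem_restrictSupport_iff_coeff.2 fun α hα => ?_⟩
    · rw [hcoeff]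
      exact if_neg hα
    · rw [coeff_sub, hcoeff]
      split_ifs with hαm
      · exact sub_self _
      · rw [sub_zero]
        exact mem_restrictSupport_iff_coeff.1 hf α fun h => hα (lt_of_le_of_ne h hαm)

lemma initialForm_eq_weightedHomogeneousComponent (hf : f ∈ restrictSupport K {α | wdeg w α ≤ m})
    {β : Fin n →₀ ℕ} (hβ : β ∈ f.support) (hβm : wdeg w β = m) :
    initialForm w f = weightedHomogeneousComponent w m f := by
  rw [initialForm, weightedHomogeneousComponent_apply]
  congr 1
  refine Finset.filter_congr fun α hα => ?_
  rw [← wdeg_eq_weight]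
  have hle : ∀ γ ∈ f.support, wdeg w γ ≤ m := fun γ hγ => (mem_restrictSupport_iff K).1 hf hγ
  exact ⟨fun h => (hle α hα).antisymm (hβm ▸ h β hβ), fun h γ hγ => h ▸ hle γ hγ⟩

lemma exists_hasLeadingPart_initialForm (w : Fin n → ℝ) (f : MvPolynomial (Fin n) K) :
    ∃ m, HasLeadingPart w m f (initialForm w f) := by
  rcases eq_or_ne f 0 with rfl | hf
  · exact ⟨0, by simp [initialForm], by simp [initialForm]⟩
  · obtain ⟨β, hβ, hmax⟩ := f.support.exists_max_image (wdeg w) (support_nonempty.2 hf)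
    have hf' : f ∈ restrictSupport K {α | wdeg w α ≤ wdeg w β} := (mem_restrictSupport_iff K).2 hmax
    exact ⟨wdeg w β, hasLeadingPart_iff.2
      ⟨hf', initialForm_eq_weightedHomogeneousComponent hf' hβ rfl⟩⟩

lemma exists_hasLeadingPart_of_nonpos (hw : ∀ i, w i ≤ 0) (f : MvPolynomial (Fin n) K) :
    ∃ g, HasLeadingPart w 0 f g :=
  ⟨_, hasLeadingPart_iff.2 ⟨(mem_restrictSupport_iff K).2 fun α _ => wdeg_nonpos hw α, rfl⟩⟩

lemma hasLeadingPart_monomial (w : Fin n → ℝ) (α : Fin n →₀ ℕ) (c : K) :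
    HasLeadingPart w (wdeg w α) (monomial α c) (monomial α c) :=
  ⟨(monomial_mem_restrictSupport K).2 (Or.inl rfl), sub_self (monomial α c) ▸ zero_mem _⟩

lemma hasLeadingPart_one (w : Fin n → ℝ) : HasLeadingPart w 0 (1 : MvPolynomial (Fin n) K) 1 :=
  wdeg_zero w ▸ hasLeadingPart_monomial w 0 1

namespace HasLeadingPart

lemma mem_initialIdeal (h : HasLeadingPart w m f g) {A : Ideal (MvPolynomial (Fin n) K)}
    (hf : f ∈ A) : g ∈ initialIdeal w A := by
  rcases eq_or_ne g 0 with rfl | hg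
  · exact zero_mem _
  obtain ⟨hfm, hgf⟩ := hasLeadingPart_iff.1 h
  obtain ⟨β, hβ⟩ := support_nonempty.2 hg
  have hβm : wdeg w β = m := (mem_restrictSupport_iff K).1 h.part_mem hβ
  have hβf : β ∈ f.support := by
    rw [hgf, mem_support_iff, coeff_weightedHomogeneousComponent] at hβ
    exact mem_support_iff.2 fun h0 => hβ (by rw [h0, ite_self])
  exact Ideal.subset_span
    ⟨f, hf, hgf.trans (initialForm_eq_weightedHomogeneousComponent hfm hβf hβm).symm⟩

protected lemma sub (h : HasLeadingPart w m f g) (h' : HasLeadingPart w m f' g') :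
    HasLeadingPart w m (f - f') (g - g') :=
  ⟨sub_mem h.part_mem h'.part_mem, by
    rw [sub_sub_sub_comm]
    exact sub_mem h.rest_mem h'.rest_mem⟩

protected lemma sum {ι : Type*} {s : Finset ι} {F G : ι → MvPolynomial (Fin n) K}
    (h : ∀ i ∈ s, HasLeadingPart w m (F i) (G i)) :
    HasLeadingPart w m (∑ i ∈ s, F i) (∑ i ∈ s, G i) :=
  ⟨sum_mem fun i hi => (h i hi).part_mem, by
    rw [← Finset.sum_sub_distrib]
    exact sum_mem fun i hi => (h i hi).rest_mem⟩

protected lemma mul (h : HasLeadingPart w m f g) (h' : HasLeadingPart w m' f' g') :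
    HasLeadingPart w (m + m') (f * f') (g * g') := by
  refine ⟨mul_mem_restrictSupport h.part_mem h'.part_mem ?_, ?_⟩
  · rintro _ ⟨α, rfl, β, rfl, rfl⟩
    exact wdeg_add w α β
  · have hsplit : f * f' - g * g' = (f - g) * (f' - g') + (f - g) * g' + g * (f' - g') := by ring
    rw [hsplit]
    refine add_mem (add_mem (mul_mem_restrictSupport h.rest_mem h'.rest_mem ?_)
      (mul_mem_restrictSupport h.rest_mem h'.part_mem ?_))
      (mul_mem_restrictSupport h.part_mem h'.rest_mem ?_)
    all_goals
      rintro _ ⟨α, hα, β, hβ, rfl⟩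
      simp only [Set.mem_ofPred_eq, wdeg_add] at hα hβ ⊢
      linarith

protected lemma pow (h : HasLeadingPart w 0 f g) (k : ℕ) : HasLeadingPart w 0 (f ^ k) (g ^ k) := by
  induction k with
  | zero => simpa only [pow_zero] using hasLeadingPart_one w
  | succ k ih => simpa only [pow_succ, add_zero] using ih.mul h

protected lemma map {n' : ℕ} {w' : Fin n' → ℝ} {s : Set (Fin n →₀ ℕ)} {c : ℝ}
    (h : HasLeadingPart w m f g) (hf : f ∈ restrictSupport K s)
    (T : MvPolynomial (Fin n) K →ₗ[K] MvPolynomial (Fin n') K)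
    (hT : ∀ α ∈ s, T (monomial α 1) ∈ restrictSupport K {β | wdeg w' β = wdeg w α + c}) :
    HasLeadingPart w' (m + c) (T f) (T g) := by
  have hg : g ∈ restrictSupport K s := by
    rw [(hasLeadingPart_iff.1 h).2, mem_restrictSupport_iff_coeff]
    intro α hα
    rw [coeff_weightedHomogeneousComponent, mem_restrictSupport_iff_coeff.1 hf α hα, ite_self]
  have hinter {t : Set (Fin n →₀ ℕ)} {p : MvPolynomial (Fin n) K} (hs : p ∈ restrictSupport K s)
      (ht : p ∈ restrictSupport K t) : p ∈ restrictSupport K (s ∩ t) :=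
    (mem_restrictSupport_iff K).2 (Set.subset_inter hs ht)
  constructor
  · refine map_mem_of_mem_restrictSupport T ?_ (hinter hg h.part_mem)
    rintro α ⟨hαs, rfl⟩
    exact hT α hαs
  · rw [← map_sub]
    refine map_mem_of_mem_restrictSupport T ?_ (hinter (sub_mem hf hg) h.rest_mem)
    rintro α ⟨hαs, hα : wdeg w α < m⟩
    refine restrictSupport_mono K (fun β (hβ : _ = _) => ?_) (hT α hαs)
    simp only [Set.mem_ofPred_eq, hβ]
    linarith

end HasLeadingPart

lemma initialIdeal_le_iff {A B : Ideal (MvPolynomial (Fin n) K)} :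
    initialIdeal w A ≤ B ↔ ∀ f ∈ A, ∀ m g, HasLeadingPart w m f g → g ∈ B := by
  refine ⟨fun h f hf m g hg => h (hg.mem_initialIdeal hf), fun h => Ideal.span_le.2 ?_⟩
  rintro _ ⟨f, hf, rfl⟩
  obtain ⟨m, hm⟩ := exists_hasLeadingPart_initialForm w f
  exact h f hf m _ hm

end LeadingPart

/-! ### Homogeneous ideals and the hyperplane `ℓ = 1` -/

section Homogeneous

attribute [local instance] MvPolynomial.gradedAlgebra

variable {K : Type*} [CommRing K] {n : ℕ} {w : Fin n → ℝ} {m : ℝ}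
  {f g : MvPolynomial (Fin n) K} {J : Ideal (MvPolynomial (Fin n) K)}

lemma mem_restrictSupport_degree {d : ℕ} (hf : f.IsHomogeneous d) :
    f ∈ restrictSupport K {α | α.degree = d} :=
  mem_restrictSupport_iff_coeff.2 fun _ hα => hf.coeff_eq_zero hα

lemma HasLeadingPart.homogeneousComponent (h : HasLeadingPart w m f g) (d : ℕ) :
    HasLeadingPart w m (homogeneousComponent d f) (homogeneousComponent d g) := by
  have hf : f ∈ restrictSupport K Set.univ := by rw [restrictSupport_univ]; trivial
  rw [← add_zero m]
  refine h.map hf (MvPolynomial.homogeneousComponent d) fun α _ => ?_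
  rw [homogeneousComponent_of_mem (isHomogeneous_monomial 1 rfl), add_zero]
  split_ifs
  exacts [(hasLeadingPart_monomial w α 1).part_mem, zero_mem _]

lemma HasLeadingPart.isHomogeneous {d : ℕ} (h : HasLeadingPart w m f g)
    (hf : f.IsHomogeneous d) : g.IsHomogeneous d := by
  have hd := h.homogeneousComponent d
  rw [homogeneousComponent_of_mem hf, if_pos rfl] at hd
  have hg : g = MvPolynomial.homogeneousComponent d g :=
    (hasLeadingPart_iff.1 h).2.trans (hasLeadingPart_iff.1 hd).2.symm
  exact hg ▸ homogeneousComponent_isHomogeneous d g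

lemma isHomogeneous_initialIdeal (hJ : J.IsHomogeneous (homogeneousSubmodule (Fin n) K)) :
    (initialIdeal w J).IsHomogeneous (homogeneousSubmodule (Fin n) K) := by
  have hspan : initialIdeal w J = Ideal.span
      {g | g ∈ initialIdeal w J ∧
        SetLike.IsHomogeneousElem (homogeneousSubmodule (Fin n) K) g} := by
    refine le_antisymm (initialIdeal_le_iff.2 fun f hf m g hg => ?_)
      (Ideal.span_le.2 fun g hg => hg.1)
    rw [← sum_homogeneousComponent g]
    refine sum_mem fun d _ => Ideal.subset_span ⟨?_, d, homogeneousComponent_mem d g⟩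
    exact (hg.homogeneousComponent d).mem_initialIdeal (homogeneousComponent_mem_of_mem hJ hf d)
  rw [hspan]
  exact Ideal.homogeneous_span _ _ fun g hg => hg.2

/-- Homogenization with respect to `ℓ` in place of a new variable: the part of degree `d ≤ N` is
multiplied by `ℓ ^ (N - d)`, and the parts of degree above `N` are discarded. -/
def homogenizeBy (ℓ : MvPolynomial (Fin n) K) (N : ℕ) :
    MvPolynomial (Fin n) K →ₗ[K] MvPolynomial (Fin n) K :=
  ∑ d ∈ Finset.range (N + 1), LinearMap.mulRight K (ℓ ^ (N - d)) ∘ₗ homogeneousComponent d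

variable {ℓ ℓ₀ : MvPolynomial (Fin n) K}

lemma homogenizeBy_apply (ℓ : MvPolynomial (Fin n) K) (N : ℕ) (f : MvPolynomial (Fin n) K) :
    homogenizeBy ℓ N f =
      ∑ d ∈ Finset.range (N + 1), homogeneousComponent d f * ℓ ^ (N - d) := by
  simp [homogenizeBy]

lemma homogenizeBy_of_isHomogeneous (ℓ : MvPolynomial (Fin n) K) {N d : ℕ} (hd : d ≤ N)
    (hf : f.IsHomogeneous d) : homogenizeBy ℓ N f = f * ℓ ^ (N - d) := by
  simp_rw [homogenizeBy_apply, homogeneousComponent_of_mem hf, ite_mul, zero_mul]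
  rw [Finset.sum_ite_eq', if_pos (Finset.mem_range_succ_iff.2 hd)]

lemma homogenizeBy_mem (hJ : J.IsHomogeneous (homogeneousSubmodule (Fin n) K)) (N : ℕ)
    (hf : f ∈ J) : homogenizeBy ℓ N f ∈ J := by
  rw [homogenizeBy_apply]
  exact sum_mem fun d _ => J.mul_mem_right _ (homogeneousComponent_mem_of_mem hJ hf d)

lemma homogenizeBy_mul_sub_one (hℓ : ℓ.IsHomogeneous 1) {N : ℕ} (hN : f.totalDegree + 1 ≤ N) :
    homogenizeBy ℓ N (f * (ℓ - 1)) = 0 := by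
  rw [← sum_homogeneousComponent f, Finset.sum_mul, map_sum]
  refine Finset.sum_eq_zero fun d hd => ?_
  have hdN : d + 1 ≤ N := (Finset.mem_range.1 hd).trans_le hN
  have hfd := homogeneousComponent_isHomogeneous d f
  rw [mul_sub_one, map_sub, homogenizeBy_of_isHomogeneous ℓ hdN (hfd.mul hℓ),
    homogenizeBy_of_isHomogeneous ℓ (d.le_succ.trans hdN) hfd, mul_assoc, ← pow_succ',
    show N - (d + 1) + 1 = N - d by omega, sub_self]

lemma sub_homogenizeBy_mem_span (ℓ : MvPolynomial (Fin n) K) {N : ℕ} (hN : f.totalDegree ≤ N) :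
    f - homogenizeBy ℓ N f ∈ Ideal.span {ℓ - 1} := by
  nth_rw 1 2 [← sum_homogeneousComponent f]
  rw [map_sum, ← Finset.sum_sub_distrib]
  refine sum_mem fun d hd => ?_
  rw [homogenizeBy_of_isHomogeneous ℓ ((Finset.mem_range_succ_iff.1 hd).trans hN)
    (homogeneousComponent_isHomogeneous d f), ← mul_one_sub]
  refine Ideal.mul_mem_left _ _ (Ideal.mem_span_singleton.2 ?_)
  rw [dvd_sub_comm]
  exact sub_one_dvd_pow_sub_one ℓ (N - d)

lemma HasLeadingPart.homogenizeBy (h : HasLeadingPart w m f g) (hℓ : HasLeadingPart w 0 ℓ ℓ₀)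
    (N : ℕ) : HasLeadingPart w m (homogenizeBy ℓ N f) (homogenizeBy ℓ₀ N g) := by
  rw [homogenizeBy_apply, homogenizeBy_apply]
  refine .sum fun d _ => ?_
  simpa only [add_zero] using (h.homogeneousComponent d).mul (hℓ.pow (N - d))

theorem initialIdeal_sup_span_sub_one (hJ : J.IsHomogeneous (homogeneousSubmodule (Fin n) K))
    (hℓ : ℓ.IsHomogeneous 1) (hℓ₀ : HasLeadingPart w 0 ℓ ℓ₀) :
    initialIdeal w (J ⊔ Ideal.span {ℓ - 1}) = initialIdeal w J ⊔ Ideal.span {ℓ₀ - 1} := by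
  apply le_antisymm
  · refine initialIdeal_le_iff.2 fun f hf m g hfg => ?_
    obtain ⟨q, hq, r, hr, rfl⟩ := Submodule.mem_sup.1 hf
    obtain ⟨p, rfl⟩ := Ideal.mem_span_singleton'.1 hr
    let N := max (p.totalDegree + 1) g.totalDegree
    have hJN : homogenizeBy ℓ N (q + p * (ℓ - 1)) ∈ J := by
      rw [map_add, homogenizeBy_mul_sub_one hℓ (le_max_left _ _), add_zero]
      exact homogenizeBy_mem hJ N hq
    rw [← add_sub_cancel (homogenizeBy ℓ₀ N g) g]
    exact Submodule.add_mem_sup ((hfg.homogenizeBy hℓ₀ N).mem_initialIdeal hJN)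
      (sub_homogenizeBy_mem_span ℓ₀ (le_max_right _ _))
  · refine sup_le (initialIdeal_le_iff.2 fun f hf m g hfg =>
      hfg.mem_initialIdeal (Ideal.mem_sup_left hf)) ?_
    rw [Ideal.span_singleton_le_iff_mem]
    exact (hℓ₀.sub (hasLeadingPart_one w)).mem_initialIdeal
      (Ideal.mem_sup_right (Ideal.mem_span_singleton_self _))

/-! ### Dehomogenization -/

/-- The dehomogenization `F ↦ F(1, x₁, …, xₙ)`. -/
def dehomogenize : MvPolynomial (Fin (n + 1)) K →ₐ[K] MvPolynomial (Fin n) K :=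
  aeval (Fin.cons 1 X)

/-- Homogenization to degree `d`, which sends `x ^ α` to `x₀ ^ (d - |α|) * x ^ α`; it is meaningful
only on polynomials of total degree at most `d`. -/
def homogenize (d : ℕ) : MvPolynomial (Fin n) K →ₗ[K] MvPolynomial (Fin (n + 1)) K :=
  (basisMonomials (Fin n) K).constr K fun α => monomial (Finsupp.cons (d - α.degree) α) 1

lemma dehomogenize_monomial (α : Fin (n + 1) →₀ ℕ) :
    dehomogenize (monomial α (1 : K)) = monomial α.tail 1 := by
  rw [dehomogenize, aeval_monomial, Finsupp.prod_fintype _ _ fun i => pow_zero _,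
    Fin.prod_univ_succ]
  simp only [map_one, Fin.cons_zero, one_pow, Fin.cons_succ, one_mul]
  rw [monomial_eq, map_one, one_mul, Finsupp.prod_fintype _ _ fun i => pow_zero _]
  rfl

lemma homogenize_monomial (d : ℕ) (α : Fin n →₀ ℕ) :
    homogenize d (monomial α (1 : K)) = monomial (Finsupp.cons (d - α.degree) α) 1 := by
  simpa only [homogenize, coe_basisMonomials] using (basisMonomials (Fin n) K).constr_basis K
    (fun α => monomial (Finsupp.cons (d - α.degree) α) (1 : K)) α

lemma degree_cons (a : ℕ) (α : Fin n →₀ ℕ) : (Finsupp.cons a α).degree = a + α.degree := by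
  simp [Finsupp.degree_eq_sum, Fin.sum_univ_succ]

lemma dehomogenize_homogenize (d : ℕ) (f : MvPolynomial (Fin n) K) :
    dehomogenize (homogenize d f) = f := by
  suffices dehomogenize.toLinearMap ∘ₗ homogenize d = LinearMap.id (R := K) from
    LinearMap.congr_fun this f
  refine (basisMonomials (Fin n) K).ext fun α => ?_
  simp only [coe_basisMonomials, LinearMap.comp_apply, homogenize_monomial,
    AlgHom.toLinearMap_apply, dehomogenize_monomial, Finsupp.tail_cons, LinearMap.id_apply]

lemma isHomogeneous_homogenize {d : ℕ} (hf : f.totalDegree ≤ d) :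
    (homogenize d f).IsHomogeneous d := by
  have hdeg : f ∈ restrictSupport K {α | α.degree ≤ d} :=
    (mem_restrictSupport_iff K).2 fun α hα => (le_totalDegree hα).trans hf
  refine map_mem_of_mem_restrictSupport (homogenize d) (N := homogeneousSubmodule _ K d) ?_ hdeg
  intro α (hα : α.degree ≤ d)
  rw [homogenize_monomial]
  exact isHomogeneous_monomial _ (by rw [degree_cons, Nat.sub_add_cancel hα])

lemma wdeg_cons_sub (w : Fin (n + 1) → ℝ) (a : ℕ) (α : Fin n →₀ ℕ) :
    wdeg w (Finsupp.cons a α) =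
      wdeg (fun i => w i.succ - w 0) α + w 0 * (Finsupp.cons a α).degree := by
  rw [degree_cons, Finsupp.degree_eq_sum]
  simp only [wdeg, Fin.sum_univ_succ, Finsupp.cons_zero, Finsupp.cons_succ, sub_mul,
    Finset.sum_sub_distrib, ← Finset.mul_sum]
  push_cast
  ring

variable {w : Fin (n + 1) → ℝ}

lemma HasLeadingPart.dehomogenize {F G : MvPolynomial (Fin (n + 1)) K} {d : ℕ}
    (h : HasLeadingPart w m F G) (hF : F.IsHomogeneous d) :
    HasLeadingPart (fun i => w i.succ - w 0) (m + -(w 0 * d)) (dehomogenize F)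
      (dehomogenize G) := by
  refine h.map (mem_restrictSupport_degree hF) _root_.dehomogenize.toLinearMap fun α hα => ?_
  rw [AlgHom.toLinearMap_apply, dehomogenize_monomial, monomial_mem_restrictSupport]
  have hα : α.degree = d := hα
  have hwα := wdeg_cons_sub w (α 0) α.tail
  rw [Finsupp.cons_tail, hα] at hwα
  exact Or.inl (eq_add_neg_of_add_eq hwα.symm)

lemma HasLeadingPart.homogenize (h : HasLeadingPart (fun i => w i.succ - w 0) m f g) {d : ℕ}
    (hf : f.totalDegree ≤ d) :
    HasLeadingPart w (m + w 0 * d) (homogenize d f) (homogenize d g) := by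
  have hdeg : f ∈ restrictSupport K {α | α.degree ≤ d} :=
    (mem_restrictSupport_iff K).2 fun α hα => (le_totalDegree hα).trans hf
  refine h.map hdeg (_root_.homogenize d) fun α (hα : α.degree ≤ d) => ?_
  rw [homogenize_monomial, monomial_mem_restrictSupport]
  left
  change wdeg w _ = _
  rw [wdeg_cons_sub, degree_cons, Nat.sub_add_cancel hα]

lemma isHomogeneous_projClosureIdeal (I : Ideal (MvPolynomial (Fin n) ℂ)) :
    (projClosureIdeal I).IsHomogeneous (homogeneousSubmodule (Fin (n + 1)) ℂ) :=
  Ideal.homogeneous_span _ _ fun _ hF => hF.1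

theorem map_dehomogenize_initialIdeal_projClosureIdeal (w : Fin (n + 1) → ℝ)
    (I : Ideal (MvPolynomial (Fin n) ℂ)) :
    (initialIdeal w (projClosureIdeal I)).map dehomogenize =
      initialIdeal (fun i => w i.succ - w 0) I := by
  have hdehom : projClosureIdeal I ≤ I.comap dehomogenize := Ideal.span_le.2 fun F hF => hF.2
  apply le_antisymm
  · refine Ideal.map_le_iff_le_comap.2 (initialIdeal_le_iff.2 fun F hF m G hFG => ?_)
    rw [← sum_homogeneousComponent G]
    refine sum_mem fun d _ => ?_
    have hFd := homogeneousComponent_mem_of_mem (isHomogeneous_projClosureIdeal I) hF d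
    exact ((hFG.homogeneousComponent d).dehomogenize
      (homogeneousComponent_isHomogeneous d F)).mem_initialIdeal (hdehom hFd)
  · refine initialIdeal_le_iff.2 fun f hf m g hfg => ?_
    have hmem : homogenize f.totalDegree f ∈ projClosureIdeal I :=
      Ideal.subset_span ⟨⟨_, isHomogeneous_homogenize le_rfl⟩,
        (dehomogenize_homogenize f.totalDegree f).symm ▸ hf⟩
    rw [← dehomogenize_homogenize f.totalDegree g]
    exact Ideal.mem_map_of_mem _ ((hfg.homogenize le_rfl).mem_initialIdeal hmem)

end Homogeneous

/-! ### The subscheme of the torus defined by an ideal -/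

section Torus

variable {K R : Type*} [CommRing K] [CommRing R] [Algebra K R] {n : ℕ}

/-- `polyToLaurent` as a homomorphism of `K`-algebras. -/
def polyToLaurentAlgHom : MvPolynomial (Fin n) K →ₐ[K] MvLaurent n K :=
  { polyToLaurent with
    commutes' := fun r => by
      change AddMonoidAlgebra.mapDomain _ (AddMonoidAlgebra.single 0 r) = _
      rw [AddMonoidAlgebra.mapDomain_single, map_zero]
      rfl }

variable (K) in
/-- The variable `x_i` as a unit of the Laurent polynomial ring. -/
def laurentVar (i : Fin n) : (MvLaurent n K)ˣ where
  val := AddMonoidAlgebra.single (Finsupp.single i 1) 1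
  inv := AddMonoidAlgebra.single (Finsupp.single i (-1)) 1
  val_inv := by
    rw [AddMonoidAlgebra.single_mul_single, ← Finsupp.single_add]
    simp [AddMonoidAlgebra.one_def]
  inv_val := by
    rw [AddMonoidAlgebra.single_mul_single, ← Finsupp.single_add]
    simp [AddMonoidAlgebra.one_def]

lemma polyToLaurent_X (i : Fin n) :
    polyToLaurent (X i : MvPolynomial (Fin n) K) = laurentVar K i := by
  change AddMonoidAlgebra.mapDomain _ (AddMonoidAlgebra.single (Finsupp.single i 1) 1) = _
  rw [AddMonoidAlgebra.mapDomain_single]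
  simp [laurentVar]

lemma laurent_algHom_ext {φ₁ φ₂ : MvLaurent n K →ₐ[K] R}
    (h : ∀ i : Fin n, φ₁ (laurentVar K i) = φ₂ (laurentVar K i)) : φ₁ = φ₂ := by
  refine AddMonoidAlgebra.algHom_ext' (MonoidHom.toAdditiveRight.injective ?_)
    (Subsingleton.elim _ _)
  refine Finsupp.addHom_ext' fun i => ?_
  exact AddMonoidHom.ext_int (h i)

/-- The homomorphism from the Laurent polynomial ring sending the variables to the units `u i`. -/
def laurentLift (u : Fin n → Rˣ) : MvLaurent n K →ₐ[K] R :=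
  AddMonoidAlgebra.lift K R (Fin n →₀ ℤ)
    { toFun := fun α => ((∏ i, u i ^ α.toAdd i : Rˣ) : R)
      map_one' := by simp
      map_mul' := fun α β => by
        rw [← Units.val_mul, ← Finset.prod_mul_distrib]
        simp [zpow_add] }

lemma laurentLift_laurentVar (u : Fin n → Rˣ) (i : Fin n) :
    laurentLift (K := K) u (laurentVar K i) = u i := by
  simp only [laurentLift, laurentVar, AddMonoidAlgebra.lift_single, one_smul, MonoidHom.coe_mk,
    OneHom.coe_mk, toAdd_ofAdd]
  rw [Finset.prod_eq_single i (fun j _ hj => by rw [Finsupp.single_eq_of_ne hj, zpow_zero])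
    (fun h => (h (Finset.mem_univ i)).elim), Finsupp.single_eq_same, zpow_one]

lemma laurentLift_polyToLaurent (u : Fin n → Rˣ) (f : MvPolynomial (Fin n) K) :
    laurentLift u (polyToLaurent f) = aeval (fun i => (u i : R)) f := by
  suffices (laurentLift u).comp polyToLaurentAlgHom = aeval (R := K) fun i => (u i : R) from
    DFunLike.congr_fun this f
  refine MvPolynomial.algHom_ext fun i => ?_
  rw [aeval_X]
  exact (congrArg _ (polyToLaurent_X i)).trans (laurentLift_laurentVar u i)

instance finiteType_mvLaurent : Algebra.FiniteType K (MvLaurent n K) := by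
  have : AddGroup.FG (Fin n →₀ ℤ) := Module.Finite.iff_addGroup_fg.1 inferInstance
  have : AddMonoid.FG (Fin n →₀ ℤ) := AddGroup.fg_iff_addMonoid_fg.1 this
  infer_instance

/-- The coordinate ring of the closed subscheme of the torus defined by `A`. -/
abbrev TorusRing (A : Ideal (MvPolynomial (Fin n) K)) : Type _ :=
  MvLaurent n K ⧸ A.map polyToLaurent

/-- The coordinate function `x_i` as a unit of `TorusRing A`. -/
def torusCoord (A : Ideal (MvPolynomial (Fin n) K)) (i : Fin n) : (TorusRing A)ˣ :=
  Units.map (MonoidHomClass.toMonoidHom (Ideal.Quotient.mk (A.map polyToLaurent))) (laurentVar K i)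

variable {A : Ideal (MvPolynomial (Fin n) K)}

lemma aeval_torusCoord_eq_zero {f : MvPolynomial (Fin n) K} (hf : f ∈ A) :
    aeval (fun i => (torusCoord A i : TorusRing A)) f = 0 := by
  have hmk : (Ideal.Quotient.mkₐ K (A.map polyToLaurent)).comp polyToLaurentAlgHom =
      aeval fun i => (torusCoord A i : TorusRing A) :=
    MvPolynomial.algHom_ext fun i => by
      rw [aeval_X]
      exact congrArg _ (polyToLaurent_X i)
  rw [← hmk]
  exact Ideal.Quotient.eq_zero_iff_mem.2 (Ideal.mem_map_of_mem polyToLaurent hf)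

lemma torusRing_algHom_ext {φ₁ φ₂ : TorusRing A →ₐ[K] R}
    (h : ∀ i, φ₁ (torusCoord A i) = φ₂ (torusCoord A i)) : φ₁ = φ₂ :=
  Ideal.Quotient.algHom_ext K (laurent_algHom_ext h)

/-- A point `u` of the torus with values in `R` at which `A` vanishes, as a homomorphism from
`TorusRing A`. -/
def torusLift (u : Fin n → Rˣ) (hu : ∀ f ∈ A, aeval (fun i => (u i : R)) f = 0) :
    TorusRing A →ₐ[K] R :=
  Ideal.Quotient.liftₐ (A.map polyToLaurent) (laurentLift u) fun z hz => by
    have hle : A.map polyToLaurent ≤ RingHom.ker (laurentLift (K := K) u) :=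
      Ideal.map_le_iff_le_comap.2 fun f hf => (laurentLift_polyToLaurent u f).trans (hu f hf)
    exact hle hz

lemma torusLift_torusCoord (u : Fin n → Rˣ) (hu : ∀ f ∈ A, aeval (fun i => (u i : R)) f = 0)
    (i : Fin n) : torusLift u hu (torusCoord A i) = u i :=
  laurentLift_laurentVar u i

lemma map_torusLift_torusCoord (u : Fin n → Rˣ)
    (hu : ∀ f ∈ A, aeval (fun i => (u i : R)) f = 0) (i : Fin n) :
    Units.map (torusLift u hu : TorusRing A →* R) (torusCoord A i) = u i :=
  Units.ext (torusLift_torusCoord u hu i)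

end Torus

/-! ### Setting `ℓ = 1` or `x₀ = 1` gives the same subscheme of the torus -/

section Slices

attribute [local instance] MvPolynomial.gradedAlgebra

variable {K R : Type*} [CommRing K] [CommRing R] [Algebra K R] {n : ℕ}

lemma aeval_mul_of_isHomogeneous {d : ℕ} {F : MvPolynomial (Fin n) K} (hF : F.IsHomogeneous d)
    (c : R) (z : Fin n → R) : aeval (fun i => c * z i) F = c ^ d * aeval z F := by
  rw [← sub_eq_zero, ← Submodule.mem_bot K]
  refine map_mem_of_mem_restrictSupport ((aeval fun i => c * z i).toLinearMap -
    LinearMap.mulLeft K (c ^ d) ∘ₗ (aeval z).toLinearMap) ?_ (mem_restrictSupport_degree hF)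
  rintro α (rfl : α.degree = d)
  simp [aeval_monomial, Finsupp.prod_fintype, mul_pow, Finset.prod_mul_distrib,
    Finset.prod_pow_eq_pow_sum, Finsupp.degree_eq_sum]

lemma aeval_mul_eq_zero {H : Ideal (MvPolynomial (Fin n) K)}
    (hH : H.IsHomogeneous (homogeneousSubmodule (Fin n) K)) {z : Fin n → R}
    (hz : ∀ F ∈ H, aeval z F = 0) (c : R) {F : MvPolynomial (Fin n) K} (hF : F ∈ H) :
    aeval (fun i => c * z i) F = 0 := by
  rw [← sum_homogeneousComponent F, map_sum]
  refine Finset.sum_eq_zero fun d _ => ?_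
  rw [aeval_mul_of_isHomogeneous (homogeneousComponent_isHomogeneous d F),
    hz _ (homogeneousComponent_mem_of_mem hH hF d), mul_zero]

lemma aeval_eq_zero_of_mem_sup_span_sub_one {A : Ideal (MvPolynomial (Fin n) K)}
    {ℓ : MvPolynomial (Fin n) K} {z : Fin n → R} (hz : ∀ f ∈ A, aeval z f = 0)
    (hℓ : aeval z ℓ = 1) : ∀ f ∈ A ⊔ Ideal.span {ℓ - 1}, aeval z f = 0 := by
  have hle : A ⊔ Ideal.span {ℓ - 1} ≤ RingHom.ker (aeval (R := K) z) := by
    refine sup_le hz ((Ideal.span_singleton_le_iff_mem _).2 ?_)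
    rw [RingHom.mem_ker, map_sub, map_one, hℓ, sub_self]
  exact hle

lemma aeval_torusCoord_sup_span_sub_one (A : Ideal (MvPolynomial (Fin n) K))
    (ℓ : MvPolynomial (Fin n) K) :
    aeval (fun i => (torusCoord (A ⊔ Ideal.span {ℓ - 1}) i :
      TorusRing (A ⊔ Ideal.span {ℓ - 1}))) ℓ = 1 := by
  have hmem : ℓ - 1 ∈ A ⊔ Ideal.span {ℓ - 1} :=
    Ideal.mem_sup_right (Ideal.mem_span_singleton_self _)
  rw [← sub_eq_zero, ← aeval_torusCoord_eq_zero hmem, map_sub, map_one]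

lemma aeval_dehomogenize (y : Fin n → R) (F : MvPolynomial (Fin (n + 1)) K) :
    aeval y (dehomogenize F) = aeval (Fin.cons 1 y) F := by
  suffices (aeval y).comp dehomogenize = aeval (R := K) (Fin.cons 1 y) from
    DFunLike.congr_fun this F
  refine MvPolynomial.algHom_ext fun i => ?_
  refine Fin.cases ?_ (fun i => ?_) i <;> simp [dehomogenize]

lemma forall_mem_map_dehomogenize_aeval_eq_zero_iff {H : Ideal (MvPolynomial (Fin (n + 1)) K)}
    {y : Fin n → R} : (∀ f ∈ H.map dehomogenize, aeval y f = 0) ↔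
      ∀ F ∈ H, aeval (Fin.cons 1 y) F = 0 := by
  simp only [← aeval_dehomogenize]
  exact Ideal.map_le_iff_le_comap (K := RingHom.ker (aeval (R := K) y))

variable {H : Ideal (MvPolynomial (Fin (n + 1)) K)} {ℓ : MvPolynomial (Fin (n + 1)) K}

/-- The point `(1, y₁, …, yₙ)`, where `y` are the coordinate functions on the subscheme of the
torus defined by the dehomogenization of `H`. -/
def affinePoint (H : Ideal (MvPolynomial (Fin (n + 1)) K)) :
    Fin (n + 1) → (TorusRing (H.map dehomogenize))ˣ :=
  Fin.cons 1 (torusCoord (H.map dehomogenize))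

lemma aeval_affinePoint_eq_zero {F : MvPolynomial (Fin (n + 1)) K} (hF : F ∈ H) :
    aeval (fun i => (affinePoint H i : TorusRing (H.map dehomogenize))) F = 0 := by
  have hcons : (fun i => (affinePoint H i : TorusRing (H.map dehomogenize))) =
      Fin.cons 1 fun i => (torusCoord (H.map dehomogenize) i : TorusRing (H.map dehomogenize)) := by
    funext i
    refine Fin.cases ?_ (fun i => ?_) i <;> simp [affinePoint]
  rw [hcons]
  exact forall_mem_map_dehomogenize_aeval_eq_zero_iff.1
    (fun f hf => aeval_torusCoord_eq_zero hf) F hF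

/-- The homomorphism of coordinate rings of the morphism `y ↦ ℓ(1, y)⁻¹ • (1, y)`; here `lam` is
`ℓ(1, y)` as a unit. -/
def rescaleHom (hH : H.IsHomogeneous (homogeneousSubmodule (Fin (n + 1)) K))
    (hℓ : ℓ.IsHomogeneous 1) {lam : (TorusRing (H.map dehomogenize))ˣ}
    (hlam : aeval (fun i => (affinePoint H i : TorusRing (H.map dehomogenize))) ℓ = lam) :
    TorusRing (H ⊔ Ideal.span {ℓ - 1}) →ₐ[K] TorusRing (H.map dehomogenize) :=
  torusLift (fun i => lam⁻¹ * affinePoint H i) <| by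
    simp only [Units.val_mul]
    refine aeval_eq_zero_of_mem_sup_span_sub_one
      (fun F hF => aeval_mul_eq_zero hH (fun G hG => aeval_affinePoint_eq_zero hG) _ hF) ?_
    rw [aeval_mul_of_isHomogeneous hℓ, hlam, pow_one, Units.inv_mul]

/-- The homomorphism of coordinate rings of the morphism `x ↦ (x₁ / x₀, …, xₙ / x₀)`. -/
def dehomogenizeHom (hH : H.IsHomogeneous (homogeneousSubmodule (Fin (n + 1)) K))
    (ℓ : MvPolynomial (Fin (n + 1)) K) :
    TorusRing (H.map dehomogenize) →ₐ[K] TorusRing (H ⊔ Ideal.span {ℓ - 1}) :=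
  torusLift (fun i => (torusCoord _ 0)⁻¹ * torusCoord _ i.succ) <| by
    refine forall_mem_map_dehomogenize_aeval_eq_zero_iff.2 fun F hF => ?_
    rw [← aeval_mul_eq_zero hH (fun G hG => aeval_torusCoord_eq_zero (Ideal.mem_sup_left hG))
      ((torusCoord (H ⊔ Ideal.span {ℓ - 1}) 0)⁻¹ : _ˣ).val hF]
    congr 2
    funext i
    refine Fin.cases ?_ (fun i => ?_) i <;> simp

lemma map_dehomogenizeHom_affinePoint
    (hH : H.IsHomogeneous (homogeneousSubmodule (Fin (n + 1)) K)) (i : Fin (n + 1)) :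
    Units.map (MonoidHomClass.toMonoidHom (dehomogenizeHom hH ℓ)) (affinePoint H i) =
      (torusCoord _ 0)⁻¹ * torusCoord _ i := by
  refine Fin.cases ?_ (fun i => ?_) i
  · simp [affinePoint]
  · exact map_torusLift_torusCoord _ _ i

lemma map_dehomogenizeHom_unit (hH : H.IsHomogeneous (homogeneousSubmodule (Fin (n + 1)) K))
    (hℓ : ℓ.IsHomogeneous 1) {lam : (TorusRing (H.map dehomogenize))ˣ}
    (hlam : aeval (fun i => (affinePoint H i : TorusRing (H.map dehomogenize))) ℓ = lam) :
    Units.map (MonoidHomClass.toMonoidHom (dehomogenizeHom hH ℓ)) lam = (torusCoord _ 0)⁻¹ := by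
  have hpoint (i) : dehomogenizeHom hH ℓ (affinePoint H i) =
      ((torusCoord (H ⊔ Ideal.span {ℓ - 1}) 0)⁻¹ * torusCoord _ i : _ˣ).val :=
    congrArg Units.val (map_dehomogenizeHom_affinePoint hH i)
  refine Units.ext ?_
  change dehomogenizeHom hH ℓ lam = _
  rw [← hlam, comp_aeval_apply]
  simp only [hpoint, Units.val_mul]
  rw [aeval_mul_of_isHomogeneous hℓ, aeval_torusCoord_sup_span_sub_one, pow_one, mul_one]

/-- The isomorphism between the subschemes of the tori defined by `H + ⟨ℓ - 1⟩` and by the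
dehomogenization of `H`. -/
def torusRingEquiv (hH : H.IsHomogeneous (homogeneousSubmodule (Fin (n + 1)) K))
    (hℓ : ℓ.IsHomogeneous 1) {lam : (TorusRing (H.map dehomogenize))ˣ}
    (hlam : aeval (fun i => (affinePoint H i : TorusRing (H.map dehomogenize))) ℓ = lam) :
    TorusRing (H ⊔ Ideal.span {ℓ - 1}) ≃ₐ[K] TorusRing (H.map dehomogenize) :=
  AlgEquiv.ofAlgHom (rescaleHom hH hℓ hlam) (dehomogenizeHom hH ℓ)
    (torusRing_algHom_ext fun i => by
      change rescaleHom hH hℓ hlam (dehomogenizeHom hH ℓ _) = _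
      rw [dehomogenizeHom, torusLift_torusCoord]
      change (Units.map (MonoidHomClass.toMonoidHom (rescaleHom hH hℓ hlam)) _).val = _
      rw [map_mul, map_inv, rescaleHom, map_torusLift_torusCoord,
        map_torusLift_torusCoord]
      simp [affinePoint])
    (torusRing_algHom_ext fun i => by
      change dehomogenizeHom hH ℓ (rescaleHom hH hℓ hlam _) = _
      rw [rescaleHom, torusLift_torusCoord]
      change (Units.map (MonoidHomClass.toMonoidHom (dehomogenizeHom hH ℓ)) _).val = _
      rw [map_mul, map_inv, map_dehomogenizeHom_unit hH hℓ hlam, map_dehomogenizeHom_affinePoint,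
        inv_inv, mul_inv_cancel_left]
      rfl)

theorem tropMult_sup_span_sub_one {n : ℕ} {H : Ideal (MvPolynomial (Fin (n + 1)) ℂ)}
    (hH : H.IsHomogeneous (homogeneousSubmodule (Fin (n + 1)) ℂ))
    {ℓ : MvPolynomial (Fin (n + 1)) ℂ} (hℓ : ℓ.IsHomogeneous 1)
    (hunit : IsUnit (aeval (fun i => (affinePoint H i : TorusRing (H.map dehomogenize))) ℓ)) :
    tropMult (H ⊔ Ideal.span {ℓ - 1}) = tropMult (H.map dehomogenize) := by
  obtain ⟨lam, hlam⟩ := hunit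
  exact finsum_localMult_eq_of_ringEquiv (torusRingEquiv hH hℓ hlam.symm).toRingEquiv

end Slices

/-! ### The patch condition -/

section PatchCondition

variable {K R : Type*} [CommRing K] [CommRing R] [Algebra K R] {n : ℕ} {w : Fin n → ℝ}
  {f g : MvPolynomial (Fin n) K}

/-- The point obtained from `b` by replacing the coordinates of nonzero weight by zero. For
`w ≤ 0` it is the limit of `t ^ (-w) • b` as `t → 0`. -/
def weightLimit (w : Fin n → ℝ) (b : Fin n → R) (i : Fin n) : R := if w i = 0 then b i else 0

lemma aeval_weightLimit_monomial_of_wdeg_eq_zero (hw : ∀ i, w i ≤ 0) (b : Fin n → R)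
    {α : Fin n →₀ ℕ} (hα : wdeg w α = 0) :
    aeval (weightLimit w b) (monomial α (1 : K)) = aeval b (monomial α (1 : K)) := by
  rw [wdeg, Finset.sum_eq_zero_iff_of_nonpos fun i _ =>
    mul_nonpos_of_nonpos_of_nonneg (hw i) (Nat.cast_nonneg _)] at hα
  rw [aeval_monomial, aeval_monomial, Finsupp.prod_fintype _ _ fun i => pow_zero _,
    Finsupp.prod_fintype _ _ fun i => pow_zero _]
  congr 1
  refine Finset.prod_congr rfl fun i _ => ?_
  rcases mul_eq_zero.1 (hα i (Finset.mem_univ i)) with hi | hi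
  · rw [weightLimit, if_pos hi]
  · rw [Nat.cast_eq_zero.1 hi, pow_zero, pow_zero]

lemma aeval_weightLimit_monomial_of_wdeg_neg (b : Fin n → R) {α : Fin n →₀ ℕ}
    (hα : wdeg w α < 0) : aeval (weightLimit w b) (monomial α (1 : K)) = 0 := by
  obtain ⟨i, -, hi⟩ := Finset.exists_ne_zero_of_sum_ne_zero hα.ne
  rw [aeval_monomial, Finsupp.prod_fintype _ _ fun i => pow_zero _]
  refine mul_eq_zero_of_right _ (Finset.prod_eq_zero (Finset.mem_univ i) ?_)
  rw [weightLimit, if_neg (left_ne_zero_of_mul hi),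
    zero_pow (Nat.cast_ne_zero.1 (right_ne_zero_of_mul hi))]

lemma HasLeadingPart.aeval_weightLimit (h : HasLeadingPart w 0 f g) (hw : ∀ i, w i ≤ 0)
    (b : Fin n → R) : aeval (weightLimit w b) f = aeval b g := by
  have hrest : aeval (weightLimit w b) (f - g) = 0 :=
    map_mem_of_mem_restrictSupport (N := ⊥) (aeval (weightLimit w b)).toLinearMap
      (fun α hα => aeval_weightLimit_monomial_of_wdeg_neg b hα) h.rest_mem
  have hpart : aeval (weightLimit w b) g - aeval b g = 0 :=
    map_mem_of_mem_restrictSupport (N := ⊥)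
      ((aeval (weightLimit w b)).toLinearMap - (aeval b).toLinearMap)
      (fun α hα => sub_eq_zero.2 (aeval_weightLimit_monomial_of_wdeg_eq_zero hw b hα)) h.part_mem
  rw [map_sub] at hrest
  exact (sub_eq_zero.1 hrest).trans (sub_eq_zero.1 hpart)

lemma exists_algHom_eq_zero (k : Type*) {R : Type*} [Field k] [IsAlgClosed k] [CommRing R]
    [Algebra k R] [Algebra.FiniteType k R] {x : R} (hx : ¬IsUnit x) :
    ∃ χ : R →ₐ[k] k, χ x = 0 := by
  obtain ⟨M, hM, hxM⟩ := exists_max_ideal_of_mem_nonunits hx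
  let _ := Ideal.Quotient.field M
  have : Module.Finite k (R ⧸ M) := finite_of_finite_type_of_isJacobsonRing k (R ⧸ M)
  let e : k ≃ₐ[k] R ⧸ M := AlgEquiv.ofBijective (Algebra.ofId k (R ⧸ M))
    IsAlgClosed.algebraMap_bijective_of_isIntegral
  refine ⟨(e.symm : R ⧸ M →ₐ[k] k).comp (Ideal.Quotient.mkₐ k M), ?_⟩
  rw [AlgHom.comp_apply, Ideal.Quotient.mkₐ_eq_mk, Ideal.Quotient.eq_zero_iff_mem.2 hxM, map_zero]

variable {w : Fin (n + 1) → ℝ} {J : Ideal (MvPolynomial (Fin (n + 1)) ℂ)} {v : Fin (n + 1) → ℂ}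
  {ℓ₀ : MvPolynomial (Fin (n + 1)) ℂ}

lemma PatchCond.aeval_ne_zero (hpatch : PatchCond J v) (hw : ∀ i, w i ≤ 0) (hwj : ∃ j, w j = 0)
    (hwk : ∃ k, w k ≠ 0) (hℓ₀ : HasLeadingPart w 0 (∑ i, C (v i) * X i) ℓ₀)
    {b : Fin (n + 1) → ℂ} (hb : ∀ i, b i ≠ 0) (hbJ : ∀ g ∈ initialIdeal w J, aeval b g = 0) :
    aeval b ℓ₀ ≠ 0 := by
  obtain ⟨j, hj⟩ := hwj
  obtain ⟨k, hk⟩ := hwk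
  have hne : weightLimit w b ≠ 0 := fun h => hb j (by simpa [weightLimit, hj] using congrFun h j)
  have hzero : ∀ f ∈ J, eval (weightLimit w b) f = 0 := fun f hf => by
    obtain ⟨g, hg⟩ := exists_hasLeadingPart_of_nonpos hw f
    rw [← coe_aeval_eq_eval]
    exact (hg.aeval_weightLimit hw b).trans (hbJ g (hg.mem_initialIdeal hf))
  rw [← hℓ₀.aeval_weightLimit hw b]
  simpa using hpatch _ hne hzero ⟨k, if_neg hk⟩

lemma PatchCond.isUnit_aeval {R : Type*} [CommRing R] [Algebra ℂ R] [Algebra.FiniteType ℂ R]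
    (hpatch : PatchCond J v) (hw : ∀ i, w i ≤ 0) (hwj : ∃ j, w j = 0) (hwk : ∃ k, w k ≠ 0)
    (hℓ₀ : HasLeadingPart w 0 (∑ i, C (v i) * X i) ℓ₀) (z : Fin (n + 1) → Rˣ)
    (hz : ∀ g ∈ initialIdeal w J, aeval (fun i => (z i : R)) g = 0) :
    IsUnit (aeval (fun i => (z i : R)) ℓ₀) := by
  by_contra hx
  obtain ⟨χ, hχ⟩ := exists_algHom_eq_zero ℂ hx
  rw [comp_aeval_apply] at hχ
  refine hpatch.aeval_ne_zero hw hwj hwk hℓ₀ (fun i => ((z i).isUnit.map χ).ne_zero)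
    (fun g hg => ?_) hχ
  rw [← comp_aeval_apply, hz g hg, map_zero]

end PatchCondition

theorem tropMult_patch_general {n : ℕ} (I : Ideal (MvPolynomial (Fin n) ℂ)) (v : Fin (n + 1) → ℂ)
    (hpatch : PatchCond (projClosureIdeal I) v) (w : Fin (n + 1) → ℝ) (hw : ∀ i, w i ≤ 0)
    (hwj : ∃ j, w j = 0) (hwk : ∃ k, w k ≠ 0) :
    tropMult (initialIdeal w (projClosureIdeal I ⊔ Ideal.span {(∑ i, C (v i) * X i) - 1})) =
      tropMult (initialIdeal (fun i => w i.succ - w 0) I) := by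
  have hJ := isHomogeneous_projClosureIdeal I
  have hℓ : (∑ i, C (v i) * X i).IsHomogeneous 1 :=
    .sum _ _ _ fun i _ => isHomogeneous_C_mul_X (v i) i
  obtain ⟨ℓ₀, hℓ₀⟩ := exists_hasLeadingPart_of_nonpos hw (∑ i, C (v i) * X i)
  rw [initialIdeal_sup_span_sub_one hJ hℓ hℓ₀,
    ← map_dehomogenize_initialIdeal_projClosureIdeal w I]
  exact tropMult_sup_span_sub_one (isHomogeneous_initialIdeal hJ) (hℓ₀.isHomogeneous hℓ)
    (hpatch.isUnit_aeval hw hwj hwk hℓ₀ _ fun g hg => aeval_affinePoint_eq_zero hg)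

/-- The tropical multiplicity of `In_w(Î)` in `ℂ[x₀^±,…,xₙ^±]` equals that of `In_u(I)` in
`ℂ[x₁^±,…,xₙ^±]`, where `u = (w₁ − w₀, …, wₙ − w₀)`. -/
theorem tropMult_patch {n : ℕ}
    (I : Ideal (MvPolynomial (Fin n) ℂ)) (hI : I.IsPrime)
    (hdim : ringKrullDim (MvPolynomial (Fin n) ℂ ⧸ I) = 1)
    (J : Ideal (MvPolynomial (Fin (n + 1)) ℂ)) (hJ : J = projClosureIdeal I)
    (hXJ : ∀ i, X i ∉ J)
    (v : Fin (n + 1) → ℂ) (hv : ∀ i, v i ≠ 0) (hpatch : PatchCond J v)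
    (Ihat : Ideal (MvPolynomial (Fin (n + 1)) ℂ))
    (hIhat : Ihat = J ⊔ Ideal.span {(∑ i, MvPolynomial.C (v i) * X i) - 1})
    (w : Fin (n + 1) → ℤ) (hw0 : ∀ i, w i ≤ 0) (hwj : ∃ j, w j = 0)
    (hwk : ∃ k, w k ≠ 0)
    (hproper : Ideal.map polyToLaurent (initialIdeal (fun i => (w i : ℝ)) Ihat) ≠ ⊤) :
    tropMult (initialIdeal (fun i => (w i : ℝ)) Ihat) =
      tropMult (initialIdeal (fun i : Fin n => ((w i.succ : ℝ) - (w 0 : ℝ))) I) := by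
  subst hJ hIhat
  exact tropMult_patch_general I v hpatch _ (by exact_mod_cast hw0) (by exact_mod_cast hwj)
    (by exact_mod_cast hwk)

end
end
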